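/- (Pointwise convergence, constant-stepsize bound.) Let (λ_k, z_k, z̃_k, ε_k) be NE-HPE sequences for T with parameter σ < 1, distance generating function w ∈ 𝒟_Z(m,M), and initial point z₀ ∈ Z, set r_k := (1/λ_k)(∇w(z_{k−1}) − ∇w(z_k)), τ := √2·M/√m and (dw)_0 := inf{(dw)_{z₀}(z*) : 0 ∈ T(z*)}, and assume λ̲ := inf_k λ_k > 0. Then for every k ≥ 1 there exists an index i ≤ k such that ‖r_i‖_* ≤ τ(1+√σ) √( (dw)_0 / (1−σ) · λ̲⁻¹ / Σ_{j=1}^{k} λ_j ) ≤ (τ(1+√σ)/(λ̲√k)) √((dw)_0/(1−σ)) and ε_i ≤ σ(dw)_0 / ((1−σ) Σ_{j=1}^{k} λ_j) ≤ σ(dw)_0/((1−σ) λ̲ k). -/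

import Mathlib

open RealInnerProductSpace Filter

/-- The dual (extended) seminorm of a seminorm `p`:
`‖v‖_* = sup { ⟪v, z⟫ : p z ≤ 1 }`, valued in `[-∞, ∞]`. -/
noncomputable def dualSN {E : Type*} [NormedAddCommGroup E] [InnerProductSpace ℝ E]
    (p : E → ℝ) (v : E) : EReal :=
  ⨆ z : {z : E // p z ≤ 1}, ((⟪v, z.1⟫ : ℝ) : EReal)

/-- The Bregman distance `(dw)_z(z') := w(z') - w(z) - ⟪∇w(z), z' - z⟫`
associated with `w`, whose gradient is `gw`. -/
noncomputable def breg {E : Type*} [NormedAddCommGroup E] [InnerProductSpace ℝ E]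
    (w : E → ℝ) (gw : E → E) (z z' : E) : ℝ :=
  w z' - w z - ⟪gw z, z' - z⟫

/-- `w ∈ 𝒟_Z(m, M)`: `w` is differentiable on `Z` with gradient `gw`, is `m`-strongly
convex with respect to the seminorm `p` on `Z`, and `gw` is `M`-Lipschitz from `p` to the
dual seminorm of `p` on `Z`. -/
structure IsDGF {E : Type*} [NormedAddCommGroup E] [InnerProductSpace ℝ E]
    [FiniteDimensional ℝ E]
    (Z : Set E) (p : Seminorm ℝ E) (m M : ℝ) (w : E → ℝ) (gw : E → E) : Prop where
  diff : ∀ z ∈ Z, HasGradientAt w (gw z) z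
  strconv : ∀ z ∈ Z, ∀ z' ∈ Z, m / 2 * (p (z - z'))^2 ≤ w z' - w z - ⟪gw z, z' - z⟫
  lips : ∀ z ∈ Z, ∀ z' ∈ Z, dualSN ⇑p (gw z - gw z') ≤ ((M * p (z - z') : ℝ) : EReal)

/-- A set-valued operator `T : E ⇉ E` is monotone. -/
def MonoOp {E : Type*} [NormedAddCommGroup E] [InnerProductSpace ℝ E]
    (T : E → Set E) : Prop :=
  ∀ z z' t t' : E, t ∈ T z → t' ∈ T z' → 0 ≤ ⟪z - z', t - t'⟫

/-- A set-valued operator `T : E ⇉ E` is maximal monotone. -/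
def MaxMonoOp {E : Type*} [NormedAddCommGroup E] [InnerProductSpace ℝ E]
    (T : E → Set E) : Prop :=
  MonoOp T ∧ ∀ T' : E → Set E, MonoOp T' → (∀ z, T z ⊆ T' z) → T' = T

/-- The ε-enlargement `T^[ε]` of a monotone operator `T`. -/
def epsEnl {E : Type*} [NormedAddCommGroup E] [InnerProductSpace ℝ E]
    (T : E → Set E) (ε : ℝ) (z : E) : Set E :=
  {t | ∀ z' t' : E, t' ∈ T z' → -ε ≤ ⟪t - t', z - z'⟫}

/-- NE-HPE sequences `(λ_k, z_k, z̃_k, ε_k)` for `T`, with parameter `σ`, distance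
generating function `w` (with gradient `gw`) and initial point `z_0 = zs 0 ∈ Z`. -/
structure NEHPE {E : Type*} [NormedAddCommGroup E] [InnerProductSpace ℝ E]
    (Z : Set E) (w : E → ℝ) (gw : E → E) (T : E → Set E) (σ : ℝ)
    (lam : ℕ → ℝ) (zs : ℕ → E) (zt : ℕ → E) (ε : ℕ → ℝ) : Prop where
  lam_pos : ∀ k, 1 ≤ k → 0 < lam k
  zs_mem : ∀ k, zs k ∈ Z
  zt_mem : ∀ k, 1 ≤ k → zt k ∈ Z
  eps_nonneg : ∀ k, 1 ≤ k → 0 ≤ ε k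
  incl : ∀ k, 1 ≤ k → (1 / lam k) • (gw (zs (k-1)) - gw (zs k)) ∈ epsEnl T (ε k) (zt k)
  err : ∀ k, 1 ≤ k →
    breg w gw (zs k) (zt k) + lam k * ε k ≤ σ * breg w gw (zs (k-1)) (zt k)

/-!
Writing `d_j := (dw)_{z_{j-1}}(z̃_j)`, the error criterion makes the Bregman distance from `z_j` to
any zero of `T` drop by at least `(1 - σ) d_j` at step `j`, so `(1 - σ) ∑ d_j ≤ (dw)_0`. Hence some
ratio `d_i / λ_i` is at most the `λ`-weighted average `(dw)_0 / ((1 - σ) ∑ λ_j)`. That single ratio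
controls both residuals: the error criterion gives `λ_i ε_i ≤ σ d_i`, while strong convexity puts
`z_{i-1}` and `z_i` within `√(2 d_i / m)` and `√(2 σ d_i / m)` of `z̃_i`, so the Lipschitz gradient
bounds `λ_i ‖r_i‖_*` by `τ (1 + √σ) √d_i`.
-/

theorem exists_div_le_sum_div_sum {ι 𝕜 : Type*} [Field 𝕜] [LinearOrder 𝕜] [IsStrictOrderedRing 𝕜]
    {s : Finset ι} (hs : s.Nonempty) (a : ι → 𝕜) {l : ι → 𝕜} (hl : ∀ i ∈ s, 0 < l i) :
    ∃ i ∈ s, a i / l i ≤ (∑ j ∈ s, a j) / ∑ j ∈ s, l j := by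
  have hsum : ∑ j ∈ s, a j ≤ ∑ i ∈ s, (∑ j ∈ s, a j) / (∑ j ∈ s, l j) * l i := by
    rw [← Finset.mul_sum, div_mul_cancel₀ _ (Finset.sum_pos hl hs).ne']
  obtain ⟨i, hi, hle⟩ := Finset.exists_le_of_sum_le hs hsum
  exact ⟨i, hi, (div_le_iff₀ (hl i hi)).2 hle⟩

theorem le_sqrt_two_div_sqrt_mul_sqrt {m t b : ℝ} (hm : 0 < m) (h : m / 2 * t ^ 2 ≤ b) :
    t ≤ √2 / √m * √b := by
  rw [← Real.sqrt_div zero_le_two, ← Real.sqrt_mul (by positivity)]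
  apply Real.le_sqrt_of_sq_le
  rw [div_mul_eq_mul_div, le_div_iff₀ hm]
  linarith

theorem sqrt_div_le_sqrt_mul_inv {d l l₀ q : ℝ} (hd : 0 ≤ d) (hl₀ : 0 < l₀) (hl : l₀ ≤ l)
    (hq : d / l ≤ q) : √d / l ≤ √(q * l₀⁻¹) := by
  have hlpos : 0 < l := hl₀.trans_le hl
  apply Real.le_sqrt_of_sq_le
  calc (√d / l) ^ 2 = d / l * l⁻¹ := by rw [div_pow, Real.sq_sqrt hd]; ring
    _ ≤ q * l⁻¹ := by gcongr
    _ ≤ q * l₀⁻¹ := by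
      have : 0 ≤ q := (div_nonneg hd hlpos.le).trans hq
      gcongr

theorem sqrt_mul_inv_div_le {c l n S : ℝ} (hc : 0 ≤ c) (hl : 0 < l) (hn : 0 < n)
    (hS : l * n ≤ S) : √(c * (l⁻¹ / S)) ≤ √c / (l * √n) := by
  rw [Real.sqrt_mul hc, div_eq_mul_one_div √c]
  refine mul_le_mul_of_nonneg_left (Real.sqrt_le_iff.2 ⟨by positivity, ?_⟩) (Real.sqrt_nonneg c)
  calc l⁻¹ / S ≤ l⁻¹ / (l * n) := by gcongr
    _ = (1 / (l * √n)) ^ 2 := by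
      rw [div_pow, mul_pow, Real.sq_sqrt hn.le]
      field_simp

theorem mul_natCast_le_sum_Icc_one {l : ℝ} {lam : ℕ → ℝ} (hlam : ∀ j, 1 ≤ j → l ≤ lam j) (k : ℕ) :
    l * k ≤ ∑ j ∈ Finset.Icc 1 k, lam j := by
  simpa [mul_comm] using Finset.card_nsmul_le_sum (Finset.Icc 1 k) lam l
    fun j hj => hlam j (Finset.mem_Icc.1 hj).1

section

variable {E : Type*} [NormedAddCommGroup E] [InnerProductSpace ℝ E]

theorem inner_le_dualSN {p : E → ℝ} (v : E) {z : E} (hz : p z ≤ 1) :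
    ((⟪v, z⟫ : ℝ) : EReal) ≤ dualSN p v :=
  le_iSup (fun y : {y : E // p y ≤ 1} => ((⟪v, y.1⟫ : ℝ) : EReal)) ⟨z, hz⟩

theorem dualSN_smul_le_of_le {p : E → ℝ} {v : E} {c B : ℝ} (hc : 0 ≤ c)
    (h : dualSN p v ≤ (B : EReal)) : dualSN p (c • v) ≤ ((c * B : ℝ) : EReal) := by
  refine iSup_le fun z => EReal.coe_le_coe_iff.2 ?_
  rw [real_inner_smul_left]
  exact mul_le_mul_of_nonneg_left
    (EReal.coe_le_coe_iff.1 ((inner_le_dualSN v z.2).trans h)) hc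

theorem breg_sub_breg (w : E → ℝ) (gw : E → E) (a b x y : E) :
    breg w gw a x - breg w gw b x =
      breg w gw a y - breg w gw b y + ⟪gw a - gw b, y - x⟫ := by
  simp only [breg, inner_sub_left, inner_sub_right]
  ring

namespace NEHPE

variable {Z : Set E} {w : E → ℝ} {gw : E → E} {T : E → Set E} {σ : ℝ}
  {lam : ℕ → ℝ} {zs zt : ℕ → E} {ε : ℕ → ℝ} {p : Seminorm ℝ E} {m M : ℝ} {k : ℕ}

theorem neg_mul_eps_le_inner (h : NEHPE Z w gw T σ lam zs zt ε) {x : E} (hx : 0 ∈ T x)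
    (hk : 1 ≤ k) : -(lam k * ε k) ≤ ⟪gw (zs (k - 1)) - gw (zs k), zt k - x⟫ := by
  have hincl := h.incl k hk x 0 hx
  rw [sub_zero, real_inner_smul_left, one_div_mul_eq_div, le_div_iff₀ (h.lam_pos k hk)] at hincl
  linarith

theorem mul_breg_le_breg_sub_breg (h : NEHPE Z w gw T σ lam zs zt ε) {x : E} (hx : 0 ∈ T x)
    (hk : 1 ≤ k) : (1 - σ) * breg w gw (zs (k - 1)) (zt k) ≤
      breg w gw (zs (k - 1)) x - breg w gw (zs k) x := by
  rw [breg_sub_breg w gw _ _ x (zt k)]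
  linarith [h.neg_mul_eps_le_inner hx hk, h.err k hk]

theorem mul_sum_breg_le_breg_sub_breg (h : NEHPE Z w gw T σ lam zs zt ε) {x : E}
    (hx : 0 ∈ T x) (n : ℕ) : (1 - σ) * ∑ j ∈ Finset.Icc 1 n, breg w gw (zs (j - 1)) (zt j) ≤
      breg w gw (zs 0) x - breg w gw (zs n) x := by
  induction n with
  | zero => simp
  | succ n ih =>
    have hstep := h.mul_breg_le_breg_sub_breg hx (Nat.le_add_left 1 n)
    rw [Nat.add_sub_cancel] at hstep
    rw [Finset.sum_Icc_succ_top (Nat.le_add_left 1 n), mul_add, Nat.add_sub_cancel]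
    linarith

theorem mul_sum_breg_le_sInf (h : NEHPE Z w gw T σ lam zs zt ε)
    (hbreg : ∀ z ∈ Z, ∀ z' ∈ Z, 0 ≤ breg w gw z z') (hzero : ∀ x, 0 ∈ T x → x ∈ Z)
    (hsol : ∃ x, 0 ∈ T x) (n : ℕ) :
    (1 - σ) * ∑ j ∈ Finset.Icc 1 n, breg w gw (zs (j - 1)) (zt j) ≤
      sInf (breg w gw (zs 0) '' {x | 0 ∈ T x}) := by
  refine le_csInf (Set.Nonempty.image _ hsol) ?_
  rintro _ ⟨x, hx, rfl⟩
  linarith [h.mul_sum_breg_le_breg_sub_breg hx n, hbreg _ (h.zs_mem n) x (hzero x hx)]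

theorem exists_breg_div_lam_le (h : NEHPE Z w gw T σ lam zs zt ε)
    (hbreg : ∀ z ∈ Z, ∀ z' ∈ Z, 0 ≤ breg w gw z z') (hzero : ∀ x, 0 ∈ T x → x ∈ Z)
    (hsol : ∃ x, 0 ∈ T x) (hσ : σ < 1) (hk : 1 ≤ k) :
    ∃ i ∈ Finset.Icc 1 k, breg w gw (zs (i - 1)) (zt i) / lam i ≤
      sInf (breg w gw (zs 0) '' {x | 0 ∈ T x}) / (1 - σ) * (1 / ∑ j ∈ Finset.Icc 1 k, lam j) := by
  have hlam : ∀ j ∈ Finset.Icc 1 k, 0 < lam j :=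
    fun j hj => h.lam_pos j (Finset.mem_Icc.1 hj).1
  obtain ⟨i, hi, hle⟩ := exists_div_le_sum_div_sum (Finset.nonempty_Icc.2 hk)
    (fun j => breg w gw (zs (j - 1)) (zt j)) hlam
  refine ⟨i, hi, hle.trans ?_⟩
  rw [mul_one_div]
  refine div_le_div_of_nonneg_right ?_ (Finset.sum_nonneg fun j hj => (hlam j hj).le)
  rw [le_div_iff₀' (sub_pos.2 hσ)]
  exact h.mul_sum_breg_le_sInf hbreg hzero hsol k

theorem breg_le_mul_breg (h : NEHPE Z w gw T σ lam zs zt ε) (hk : 1 ≤ k) :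
    breg w gw (zs k) (zt k) ≤ σ * breg w gw (zs (k - 1)) (zt k) := by
  linarith [h.err k hk, mul_nonneg (h.lam_pos k hk).le (h.eps_nonneg k hk)]

theorem eps_le_mul_breg_div (h : NEHPE Z w gw T σ lam zs zt ε) (hk : 1 ≤ k)
    (hbreg : 0 ≤ breg w gw (zs k) (zt k)) :
    ε k ≤ σ * (breg w gw (zs (k - 1)) (zt k) / lam k) := by
  rw [← mul_div_assoc, le_div_iff₀' (h.lam_pos k hk)]
  linarith [h.err k hk]

theorem seminorm_sub_le (h : NEHPE Z w gw T σ lam zs zt ε) (hm : 0 < m) (hσ : 0 ≤ σ)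
    (hconv : ∀ z ∈ Z, ∀ z' ∈ Z, m / 2 * p (z - z') ^ 2 ≤ breg w gw z z') (hk : 1 ≤ k) :
    p (zs (k - 1) - zs k) ≤ √2 / √m * ((1 + √σ) * √(breg w gw (zs (k - 1)) (zt k))) := by
  set d := breg w gw (zs (k - 1)) (zt k)
  have hprev : p (zs (k - 1) - zt k) ≤ √2 / √m * √d :=
    le_sqrt_two_div_sqrt_mul_sqrt hm (hconv _ (h.zs_mem _) _ (h.zt_mem k hk))
  have hnext : p (zs k - zt k) ≤ √2 / √m * (√σ * √d) := by
    rw [← Real.sqrt_mul hσ]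
    exact le_sqrt_two_div_sqrt_mul_sqrt hm
      ((hconv _ (h.zs_mem k) _ (h.zt_mem k hk)).trans (h.breg_le_mul_breg hk))
  calc p (zs (k - 1) - zs k) = p ((zs (k - 1) - zt k) - (zs k - zt k)) := by
        rw [sub_sub_sub_cancel_right]
    _ ≤ p (zs (k - 1) - zt k) + p (zs k - zt k) := map_sub_le_add p _ _
    _ ≤ √2 / √m * √d + √2 / √m * (√σ * √d) := add_le_add hprev hnext
    _ = √2 / √m * ((1 + √σ) * √d) := by ring

theorem dualSN_residual_le (h : NEHPE Z w gw T σ lam zs zt ε) (hm : 0 < m) (hM : 0 ≤ M)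
    (hσ : 0 ≤ σ) (hconv : ∀ z ∈ Z, ∀ z' ∈ Z, m / 2 * p (z - z') ^ 2 ≤ breg w gw z z')
    (hlip : ∀ z ∈ Z, ∀ z' ∈ Z, dualSN p (gw z - gw z') ≤ ((M * p (z - z') : ℝ) : EReal))
    (hk : 1 ≤ k) :
    dualSN p ((1 / lam k) • (gw (zs (k - 1)) - gw (zs k))) ≤
      ((√2 * M / √m * (1 + √σ) * (√(breg w gw (zs (k - 1)) (zt k)) / lam k) : ℝ) : EReal) := by
  have hlam : 0 ≤ 1 / lam k := one_div_nonneg.2 (h.lam_pos k hk).le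
  refine (dualSN_smul_le_of_le hlam (hlip _ (h.zs_mem _) _ (h.zs_mem k))).trans
    (EReal.coe_le_coe_iff.2 ?_)
  calc 1 / lam k * (M * p (zs (k - 1) - zs k))
      ≤ 1 / lam k * (M * (√2 / √m * ((1 + √σ) * √(breg w gw (zs (k - 1)) (zt k))))) := by
        gcongr
        exact h.seminorm_sub_le hm hσ hconv hk
    _ = √2 * M / √m * (1 + √σ) * (√(breg w gw (zs (k - 1)) (zt k)) / lam k) := by ring

theorem sInf_lam_le (h : NEHPE Z w gw T σ lam zs zt ε) (hk : 1 ≤ k) :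
    sInf {x : ℝ | ∃ j, 1 ≤ j ∧ x = lam j} ≤ lam k := by
  refine csInf_le ⟨0, ?_⟩ ⟨k, hk, rfl⟩
  rintro _ ⟨j, hj, rfl⟩
  exact (h.lam_pos j hj).le

end NEHPE

theorem stmt6_general {Z : Set E} {p : Seminorm ℝ E} {m M : ℝ} (hm : 0 < m) (hM : 0 ≤ M)
    {w : E → ℝ} {gw : E → E} (hgrad : ∀ z ∈ Z, HasFDerivAt w (innerSL ℝ (gw z)) z)
    (hconv : ∀ z ∈ Z, ∀ z' ∈ Z, m / 2 * p (z - z') ^ 2 ≤ breg w gw z z')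
    (hlip : ∀ z ∈ Z, ∀ z' ∈ Z, dualSN p (gw z - gw z') ≤ ((M * p (z - z') : ℝ) : EReal))
    {T : E → Set E} (hzero : ∀ x, 0 ∈ T x → x ∈ Z) (hsol : ∃ x, 0 ∈ T x)
    {σ : ℝ} (hσ0 : 0 ≤ σ) (hσ1 : σ < 1)
    {lam : ℕ → ℝ} {zs zt : ℕ → E} {ε : ℕ → ℝ} (hseq : NEHPE Z w gw T σ lam zs zt ε)
    {τ : ℝ} (hτ : τ = √2 * M / √m)
    {dw0 : ℝ} (hdw0 : dw0 = sInf (breg w gw (zs 0) '' {x | 0 ∈ T x}))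
    {lamlow : ℝ} (hlampos : 0 < lamlow) (hlam : ∀ j, 1 ≤ j → lamlow ≤ lam j)
    {k : ℕ} (hk : 1 ≤ k) :
    ∃ i, 1 ≤ i ∧ i ≤ k ∧
      dualSN p ((1 / lam i) • (gw (zs (i - 1)) - gw (zs i)))
        ≤ ((τ * (1 + √σ) * √(dw0 / (1 - σ) * (lamlow⁻¹ / ∑ j ∈ Finset.Icc 1 k, lam j)) : ℝ) :
          EReal)
      ∧ τ * (1 + √σ) * √(dw0 / (1 - σ) * (lamlow⁻¹ / ∑ j ∈ Finset.Icc 1 k, lam j))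
          ≤ τ * (1 + √σ) / (lamlow * √k) * √(dw0 / (1 - σ))
      ∧ ε i ≤ σ * dw0 / (1 - σ) * (1 / ∑ j ∈ Finset.Icc 1 k, lam j)
      ∧ σ * dw0 / (1 - σ) * (1 / ∑ j ∈ Finset.Icc 1 k, lam j)
          ≤ σ * dw0 / ((1 - σ) * lamlow * k) := by
  have hbreg : ∀ z ∈ Z, ∀ z' ∈ Z, 0 ≤ breg w gw z z' :=
    fun z hz z' hz' => le_trans (by positivity) (hconv z hz z' hz')
  have hdw0_nonneg : 0 ≤ dw0 := by
    rw [hdw0]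
    exact Real.sInf_nonneg (Set.forall_mem_image.2
      fun x hx => hbreg _ (hseq.zs_mem 0) x (hzero x hx))
  have hτ_nonneg : 0 ≤ τ := by rw [hτ]; positivity
  have hσ : 0 < 1 - σ := sub_pos.2 hσ1
  have hk_pos : (0 : ℝ) < k := Nat.cast_pos.2 hk
  have hS := mul_natCast_le_sum_Icc_one hlam k
  obtain ⟨i, hi, hratio⟩ := hseq.exists_breg_div_lam_le hbreg hzero hsol hσ1 hk
  obtain ⟨hi1, hik⟩ := Finset.mem_Icc.1 hi
  rw [← hdw0] at hratio
  set S := ∑ j ∈ Finset.Icc 1 k, lam j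
  refine ⟨i, hi1, hik, ?_, ?_, ?_, ?_⟩
  · have hsqrt := sqrt_div_le_sqrt_mul_inv (hbreg _ (hseq.zs_mem (i - 1)) _ (hseq.zt_mem i hi1))
      hlampos (hlam i hi1) hratio
    rw [mul_assoc (dw0 / (1 - σ)), one_div_mul_eq_div] at hsqrt
    refine (hseq.dualSN_residual_le hm hM hσ0 hconv hlip hi1).trans (EReal.coe_le_coe_iff.2 ?_)
    rw [← hτ]
    gcongr
  · have hsqrt := sqrt_mul_inv_div_le (div_nonneg hdw0_nonneg hσ.le) hlampos hk_pos hS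
    exact (mul_le_mul_of_nonneg_left hsqrt (by positivity)).trans_eq (by ring)
  · calc ε i ≤ σ * (breg w gw (zs (i - 1)) (zt i) / lam i) :=
          hseq.eps_le_mul_breg_div hi1 (hbreg _ (hseq.zs_mem i) _ (hseq.zt_mem i hi1))
      _ ≤ σ * (dw0 / (1 - σ) * (1 / S)) := by gcongr
      _ = σ * dw0 / (1 - σ) * (1 / S) := by ring
  · rw [div_mul_div_comm, mul_one, mul_assoc (1 - σ)]
    gcongr

end

/-- Pointwise convergence: constant-stepsize bound (σ < 1, inf λ_k > 0). -/
theorem stmt6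
    {E : Type*} [NormedAddCommGroup E] [InnerProductSpace ℝ E] [FiniteDimensional ℝ E]
    (Z : Set E) (p : Seminorm ℝ E) (m M : ℝ) (hm : 0 < m) (hmM : m ≤ M)
    (w : E → ℝ) (gw : E → E) (hw : IsDGF Z p m M w gw)
    (T : E → Set E) (hT : MaxMonoOp T)
    (hdom : ∀ z, (T z).Nonempty → z ∈ Z) (hsol : ∃ z, 0 ∈ T z)
    (σ : ℝ) (hσ0 : 0 ≤ σ) (hσ1 : σ ≤ 1)
    (lam : ℕ → ℝ) (zs zt : ℕ → E) (ε : ℕ → ℝ)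
    (hseq : NEHPE Z w gw T σ lam zs zt ε)
    (r : ℕ → E) (hr : ∀ k, r k = (1 / lam k) • (gw (zs (k - 1)) - gw (zs k)))
    (hσlt : σ < 1)
    (τ : ℝ) (hτ : τ = Real.sqrt 2 * M / Real.sqrt m)
    (dw0 : ℝ) (hdw0 : dw0 = sInf (breg w gw (zs 0) '' {z | (0 : E) ∈ T z}))
    (lamlow : ℝ) (hlamlow : lamlow = sInf {x : ℝ | ∃ k, 1 ≤ k ∧ x = lam k})
    (hlampos : 0 < lamlow) :
    ∀ k : ℕ, 1 ≤ k → ∃ i, 1 ≤ i ∧ i ≤ k ∧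
      dualSN ⇑p (r i)
        ≤ ((τ * (1 + Real.sqrt σ) *
            Real.sqrt (dw0 / (1 - σ) * (lamlow⁻¹ / ∑ j ∈ Finset.Icc 1 k, lam j)) : ℝ) : EReal)
      ∧ τ * (1 + Real.sqrt σ) *
            Real.sqrt (dw0 / (1 - σ) * (lamlow⁻¹ / ∑ j ∈ Finset.Icc 1 k, lam j))
          ≤ τ * (1 + Real.sqrt σ) / (lamlow * Real.sqrt k) * Real.sqrt (dw0 / (1 - σ))
      ∧ ε i ≤ σ * dw0 / (1 - σ) * (1 / ∑ j ∈ Finset.Icc 1 k, lam j)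
      ∧ σ * dw0 / (1 - σ) * (1 / ∑ j ∈ Finset.Icc 1 k, lam j)
          ≤ σ * dw0 / ((1 - σ) * lamlow * k) := by
  intro k hk
  simpa only [hr] using stmt6_general hm (hm.le.trans hmM) hw.diff hw.strconv hw.lips
    (fun x hx => hdom x ⟨0, hx⟩) hsol hσ0 hσlt hseq hτ hdw0 hlampos
    (fun j hj => hlamlow ▸ hseq.sInf_lam_le hj) hk
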